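/- There exists a 12-element algebra A in the language {∧, ∨, ∼, ∇, 0, 1} such that a quasi-identity is admissible in the five-element Kleene–Stone algebra L₅ (equivalently, admissible in the variety of Kleene–Stone algebras) if and only if it is valid in A; moreover, for every finite set {B₁, …, B_k} of finite algebras in this language with the property that a quasi-identity is valid in all of B₁, …, B_k if and only if it is admissible in L₅, one has [12] ≤_m [|B₁|, …, |B_k|] in the multiset ordering. -/

import Mathlib

/-!
Write `F` for the free algebra on countably many generators in the variety generated by L₅; a
quasi-identity is admissible in L₅ exactly when it is valid in `F`. The witness is
`A = C₆ × 2`, where `C₆` is the six-element chain `0 < 1 < 2 < 3 < 4 < 5` with order-reversing `∼`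
and with `∇` sending all nonzero elements to the top, and `2` is the two-element algebra.

* `A` is generated by `x = (1, 0)` and `y = (2, 0)`, subject to the relations
  `x ≤ y ≤ ∼y` and `∇x = ∇y`; `elTerm p` is a term in `x, y` naming the element `p`.
* Every pair in L₅ satisfying these relations yields a homomorphism `A → L₅`
  (`isHom_homL5`); these homomorphisms separate the points of `A` (`homL5_separates`), and one of
  them has a section (as a map of sets) `liftL5`. Hence `A` and L₅ satisfy the same identities, and
  validity in `A` implies admissibility.
* The pairs in question are precisely the values of the pair of terms
  `(z ∧ ∼z) ∧ (w ∧ ∼w)`, `(z ∧ ∼z) ∧ ∇(w ∧ ∼w)`, which therefore generate a copy of `A` in `F`.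
  Hence admissibility implies validity in `A`.
* The quasi-identity `x ≤ y ≤ ∼y, ∇x ≈ ∇y ⇒ x ≈ y` fails in `A`, so it fails in some `Bᵢ`, at a
  pair `P, Q`. In `A` it fails only at the pair of generators, so adjoining any premise
  `elTerm p ≈ elTerm q` with `p ≠ q` makes it valid in `A`, hence in `Bᵢ`. Consequently the elements
  `elTerm p` evaluated at `P, Q` are pairwise distinct, and `|Bᵢ| ≥ 12`. For the singleton `[12]`
  this is exactly the multiset inequality.
-/


/-- Terms in the language {∧, ∨, ∼, ∇, 0, 1} over a set `V` of variables. -/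
inductive ISTerm (V : Type) : Type
  | var : V → ISTerm V
  | meet : ISTerm V → ISTerm V → ISTerm V
  | join : ISTerm V → ISTerm V → ISTerm V
  | sim : ISTerm V → ISTerm V    -- ∼
  | nabla : ISTerm V → ISTerm V  -- ∇
  | zero : ISTerm V
  | one : ISTerm V

/-- An algebra in the language {∧, ∨, ∼, ∇, 0, 1}. -/
structure ISAlg where
  carrier : Type
  meet : carrier → carrier → carrier
  join : carrier → carrier → carrier
  sim : carrier → carrier
  nabla : carrier → carrier
  zero : carrier
  one : carrier

/-- Evaluation of a term in an algebra under an assignment of the variables. -/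
def ISTerm.eval {V : Type} (A : ISAlg) (v : V → A.carrier) : ISTerm V → A.carrier
  | .var x => v x
  | .meet t s => A.meet (t.eval A v) (s.eval A v)
  | .join t s => A.join (t.eval A v) (s.eval A v)
  | .sim t => A.sim (t.eval A v)
  | .nabla t => A.nabla (t.eval A v)
  | .zero => A.zero
  | .one => A.one

/-- Substitution of terms for variables. -/
def ISTerm.subst {V W : Type} (s : V → ISTerm W) : ISTerm V → ISTerm W
  | .var x => s x
  | .meet t u => .meet (t.subst s) (u.subst s)
  | .join t u => .join (t.subst s) (u.subst s)
  | .sim t => .sim (t.subst s)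
  | .nabla t => .nabla (t.subst s)
  | .zero => .zero
  | .one => .one

/-- Validity of the identity `φ ≈ ψ` in the algebra `A`. -/
def ISIdValid {V : Type} (A : ISAlg) (φ ψ : ISTerm V) : Prop :=
  ∀ v : V → A.carrier, φ.eval A v = ψ.eval A v

/-- Validity of the quasi-identity `Γ ⇒ φ ≈ ψ` in the algebra `A`. -/
def ISQValid (A : ISAlg) (Γ : List (ISTerm ℕ × ISTerm ℕ)) (φ ψ : ISTerm ℕ) : Prop :=
  ∀ v : ℕ → A.carrier,
    (∀ p ∈ Γ, p.1.eval A v = p.2.eval A v) → φ.eval A v = ψ.eval A v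

/-- Admissibility of the quasi-identity `Γ ⇒ φ ≈ ψ` in the algebra `M`. -/
def ISAdmissible (M : ISAlg) (Γ : List (ISTerm ℕ × ISTerm ℕ)) (φ ψ : ISTerm ℕ) : Prop :=
  ∀ s : ℕ → ISTerm ℕ,
    (∀ p ∈ Γ, ISIdValid M (p.1.subst s) (p.2.subst s)) →
    ISIdValid M (φ.subst s) (ψ.subst s)

/-- The Dershowitz–Manna multiset ordering (induced by the usual order on `ℕ`). -/
def MultisetLE (N N' : Multiset ℕ) : Prop :=
  ∀ x : ℕ, N'.count x < N.count x → ∃ y : ℕ, x < y ∧ N.count y < N'.count y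

/-- L₅: the five-element Kleene–Stone algebra on the chain 0 < d < a < c < 1
(as `Fin 5`: 0 ↦ 0, d ↦ 1, a ↦ 2, c ↦ 3, 1 ↦ 4), with ∼ swapping 0 and 1,
swapping c and d, and fixing a, and with ∇0 = 0 and ∇x = 1 for x ≠ 0. -/
def L5alg : ISAlg := ⟨Fin 5, min, max, ![4, 3, 2, 1, 0], ![0, 4, 4, 4, 4], 0, 4⟩

/-! ### Homomorphisms and substitution -/

/-- Homomorphisms of algebras in the language {∧, ∨, ∼, ∇, 0, 1}. -/
structure IsHom (A B : ISAlg) (h : A.carrier → B.carrier) : Prop where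
  meet : ∀ p q, h (A.meet p q) = B.meet (h p) (h q)
  join : ∀ p q, h (A.join p q) = B.join (h p) (h q)
  sim : ∀ p, h (A.sim p) = B.sim (h p)
  nabla : ∀ p, h (A.nabla p) = B.nabla (h p)
  zero : h A.zero = B.zero
  one : h A.one = B.one

theorem IsHom.eval {A B : ISAlg} {h : A.carrier → B.carrier} (hh : IsHom A B h) {V : Type}
    (v : V → A.carrier) (t : ISTerm V) : t.eval B (fun n => h (v n)) = h (t.eval A v) := by
  induction t with
  | var x => rfl
  | meet t s iht ihs => simp only [ISTerm.eval, iht, ihs, hh.meet]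
  | join t s iht ihs => simp only [ISTerm.eval, iht, ihs, hh.join]
  | sim t ih => simp only [ISTerm.eval, ih, hh.sim]
  | nabla t ih => simp only [ISTerm.eval, ih, hh.nabla]
  | zero => exact hh.zero.symm
  | one => exact hh.one.symm

theorem eval_subst (A : ISAlg) {V W : Type} (s : V → ISTerm W) (v : W → A.carrier)
    (t : ISTerm V) : (t.subst s).eval A v = t.eval A (fun n => (s n).eval A v) := by
  induction t with
  | var x => rfl
  | meet t s iht ihs => simp only [ISTerm.subst, ISTerm.eval, iht, ihs]
  | join t s iht ihs => simp only [ISTerm.subst, ISTerm.eval, iht, ihs]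
  | sim t ih => simp only [ISTerm.subst, ISTerm.eval, ih]
  | nabla t ih => simp only [ISTerm.subst, ISTerm.eval, ih]
  | zero => rfl
  | one => rfl

/-! ### The algebra `C₆ × 2` and terms naming its elements -/

/-- The product of the six-element chain `C₆` and the two-element algebra. -/
def A12 : ISAlg :=
  ⟨Fin 6 × Fin 2, fun p q => (min p.1 q.1, min p.2 q.2), fun p q => (max p.1 q.1, max p.2 q.2),
    fun p => (p.1.rev, p.2.rev), fun p => (if p.1 = 0 then 0 else 5, p.2), (0, 0), (5, 1)⟩

/-- The assignment `x ↦ X, y ↦ Y`, where `x` is variable `0`; every other variable is sent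
to `Y`. -/
def pair {α : Type} (X Y : α) : ℕ → α := fun n => if n = 0 then X else Y

/-- Terms in `x, y` which, at `x = (1, 0)` and `y = (2, 0)`, have first coordinate `m`. -/
def chainTerm : Fin 6 → ISTerm ℕ :=
  ![.zero, .var 0, .var 1, .sim (.var 1), .sim (.var 0), .one]

/-- A term naming the element `p` of `C₆ × 2` in the generators `x = (1, 0)` and `y = (2, 0)`.
The element `∇x = (5, 0)` is central and separates the two factors. -/
def elTerm (p : Fin 6 × Fin 2) : ISTerm ℕ :=
  .join (.meet (chainTerm p.1) (.nabla (.var 0)))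
    ((![.zero, .sim (.nabla (.var 0))] : Fin 2 → ISTerm ℕ) p.2)

theorem eval_elTerm (B : ISAlg) (v : ℕ → B.carrier) (p : Fin 6 × Fin 2) :
    (elTerm p).eval B v = (elTerm p).eval B (pair (v 0) (v 1)) := by
  obtain ⟨m, b⟩ := p
  fin_cases m <;> fin_cases b <;> rfl

theorem eval_elTerm_generators (p : Fin 6 × Fin 2) :
    (elTerm p).eval A12 (pair ((1, 0) : Fin 6 × Fin 2) ((2, 0) : Fin 6 × Fin 2)) = p := by
  revert p
  unfold A12
  decide +kernel

/-- The relations `x ≤ y ≤ ∼y` and `∇x ≈ ∇y` presenting `C₆ × 2`. -/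
def relations : List (ISTerm ℕ × ISTerm ℕ) :=
  [(.meet (.var 0) (.var 1), .var 0), (.meet (.var 1) (.sim (.var 1)), .var 1),
    (.nabla (.var 0), .nabla (.var 1))]

/-- In `C₆ × 2`, the only pair of distinct elements satisfying the defining relations is the pair of
generators. -/
theorem relations_A12 : ∀ P Q : Fin 6 × Fin 2,
    A12.meet P Q = P → A12.meet Q (A12.sim Q) = Q → A12.nabla P = A12.nabla Q →
      P = Q ∨ (P = (1, 0) ∧ Q = (2, 0)) := by
  unfold A12
  decide +kernel

/-! ### Separating homomorphisms to L₅ -/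

/-- The image of `p` under the map from `C₆ × 2` to L₅ sending the generators to `X, Y`. -/
def homL5 (X Y : Fin 5) (p : Fin 6 × Fin 2) : Fin 5 := (elTerm p).eval L5alg (pair X Y)

/-- First of a pair of terms whose values in L₅ always satisfy the defining relations. -/
def freeX : ISTerm ℕ :=
  .meet (.meet (.var 0) (.sim (.var 0))) (.meet (.var 1) (.sim (.var 1)))

/-- Second of a pair of terms whose values in L₅ always satisfy the defining relations. -/
def freeY : ISTerm ℕ :=
  .meet (.meet (.var 0) (.sim (.var 0))) (.nabla (.meet (.var 1) (.sim (.var 1))))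

/-- The homomorphism from `C₆ × 2` to L₅ given by evaluating `freeX, freeY` at `z, w`. -/
def homAt (z w : Fin 5) : Fin 6 × Fin 2 → Fin 5 :=
  homL5 (freeX.eval L5alg (pair z w)) (freeY.eval L5alg (pair z w))

theorem isHom_homL5 (X Y : Fin 5)
    (h : (X = 0 ∧ Y = 0) ∨ (X = 1 ∧ Y = 1) ∨ (X = 1 ∧ Y = 2) ∨ (X = 2 ∧ Y = 2)) :
    IsHom A12 L5alg (homL5 X Y) := by
  rcases h with ⟨rfl, rfl⟩ | ⟨rfl, rfl⟩ | ⟨rfl, rfl⟩ | ⟨rfl, rfl⟩ <;> constructor <;>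
    unfold A12 homL5 L5alg <;> decide +kernel

theorem isHom_homAt (z w : Fin 5) : IsHom A12 L5alg (homAt z w) := by
  apply isHom_homL5
  revert z w
  unfold L5alg
  decide +kernel

theorem homL5_separates (p q : Fin 6 × Fin 2) (h : ∀ z w, homAt z w p = homAt z w q) : p = q := by
  -- The three choices of `(z, w)` give `(X, Y) = (0, 0)`, `(d, d)` and `(d, a)`.
  have h₀ := h 0 0
  have h₁ := h 1 1
  have h₂ := h 2 1
  clear h
  revert p q
  unfold homAt homL5 L5alg
  decide +kernel

/-- A section, as a map of sets, of the homomorphism sending the generators to `d, a`. -/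
def liftL5 : Fin 5 → Fin 6 × Fin 2 := ![(0, 0), (1, 0), (2, 0), (4, 0), (5, 0)]

theorem homAt_liftL5 (x : Fin 5) : homAt 2 1 (liftL5 x) = x := by
  revert x
  unfold homAt homL5 L5alg
  decide +kernel

theorem isIdValid_A12 {φ ψ : ISTerm ℕ} (h : ISIdValid L5alg φ ψ) : ISIdValid A12 φ ψ := by
  intro v
  refine homL5_separates _ _ fun z w => ?_
  rw [← (isHom_homAt z w).eval, ← (isHom_homAt z w).eval]
  exact h _

/-! ### Admissibility is validity in `C₆ × 2` -/

theorem admissible_of_valid {Γ : List (ISTerm ℕ × ISTerm ℕ)} {φ ψ : ISTerm ℕ}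
    (h : ISQValid A12 Γ φ ψ) : ISAdmissible L5alg Γ φ ψ := by
  intro s hs w
  let u : ℕ → A12.carrier := fun m => liftL5 (w m)
  have hu : (fun m => homAt 2 1 (u m)) = w := funext fun m => homAt_liftL5 (w m)
  have ev (t : ISTerm ℕ) : (t.subst s).eval L5alg w =
      homAt 2 1 (t.eval A12 fun n => (s n).eval A12 u) := by
    have h₁ := (isHom_homAt 2 1).eval u (t.subst s)
    rw [hu, eval_subst A12] at h₁
    exact h₁
  have key := h (fun n => (s n).eval A12 u) fun p hp => by
    rw [← eval_subst, ← eval_subst]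
    exact isIdValid_A12 (hs p hp) _
  exact (ev φ).trans ((congrArg (homAt 2 1) key).trans (ev ψ).symm)

/-- The term representing `p` in the copy of `C₆ × 2` inside the free algebra. -/
def freeTerm (p : Fin 6 × Fin 2) : ISTerm ℕ := (elTerm p).subst (pair freeX freeY)

theorem eval_freeTerm (w : ℕ → L5alg.carrier) (p : Fin 6 × Fin 2) :
    (freeTerm p).eval L5alg w = homAt (w 0) (w 1) p := by
  unfold freeTerm
  rw [eval_subst, eval_elTerm]
  rfl

theorem valid_of_admissible {Γ : List (ISTerm ℕ × ISTerm ℕ)} {φ ψ : ISTerm ℕ}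
    (h : ISAdmissible L5alg Γ φ ψ) : ISQValid A12 Γ φ ψ := by
  intro v hv
  let s : ℕ → ISTerm ℕ := fun n => freeTerm (v n)
  have ev (t : ISTerm ℕ) (w : ℕ → L5alg.carrier) :
      (t.subst s).eval L5alg w = homAt (w 0) (w 1) (t.eval A12 v) := by
    have hs : (fun n => (s n).eval L5alg w) = fun n => homAt (w 0) (w 1) (v n) :=
      funext fun n => eval_freeTerm w (v n)
    rw [eval_subst, hs]
    exact (isHom_homAt (w 0) (w 1)).eval v t
  refine homL5_separates _ _ fun z w => ?_
  have key : (φ.subst s).eval L5alg (pair z w) = (ψ.subst s).eval L5alg (pair z w) :=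
    h s (fun p hp u => (ev p.1 u).trans
      ((congrArg (homAt (u 0) (u 1)) (hv p hp)).trans (ev p.2 u).symm)) (pair z w)
  have e (t : ISTerm ℕ) : (t.subst s).eval L5alg (pair z w) = homAt z w (t.eval A12 v) :=
    ev t (pair z w)
  exact (e φ).symm.trans (key.trans (e ψ))

theorem admissible_iff (Γ : List (ISTerm ℕ × ISTerm ℕ)) (φ ψ : ISTerm ℕ) :
    ISAdmissible L5alg Γ φ ψ ↔ ISQValid A12 Γ φ ψ :=
  ⟨valid_of_admissible, admissible_of_valid⟩

/-! ### Minimality -/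

theorem not_valid_relations : ¬ ISQValid A12 relations (.var 0) (.var 1) := by
  intro h
  have := h (pair ((1, 0) : Fin 6 × Fin 2) ((2, 0) : Fin 6 × Fin 2)) (by
    simp only [relations, List.forall_mem_cons]
    exact ⟨rfl, rfl, rfl, by simp⟩)
  exact absurd (congrArg Prod.fst this) (by decide)

theorem valid_relations_of_ne {p q : Fin 6 × Fin 2} (hpq : p ≠ q) :
    ISQValid A12 ((elTerm p, elTerm q) :: relations) (.var 0) (.var 1) := by
  intro v hv
  simp only [relations, List.forall_mem_cons] at hv
  obtain ⟨h, h₁, h₂, h₃, -⟩ := hv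
  rcases relations_A12 (v 0) (v 1) h₁ h₂ h₃ with h₀ | ⟨hP, hQ⟩
  · exact h₀
  · rw [eval_elTerm, eval_elTerm _ _ q, hP, hQ, eval_elTerm_generators,
      eval_elTerm_generators] at h
    exact absurd h hpq

theorem exists_card_ge {k : ℕ} (B : Fin k → ISAlg) (hfin : ∀ i, Finite (B i).carrier)
    (hB : ∀ (Γ : List (ISTerm ℕ × ISTerm ℕ)) (φ ψ : ISTerm ℕ),
      (∀ i, ISQValid (B i) Γ φ ψ) ↔ ISAdmissible L5alg Γ φ ψ) :
    ∃ i, 12 ≤ Nat.card (B i).carrier := by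
  have hB' : ∀ Γ φ ψ, (∀ i, ISQValid (B i) Γ φ ψ) ↔ ISQValid A12 Γ φ ψ :=
    fun Γ φ ψ => (hB Γ φ ψ).trans (admissible_iff Γ φ ψ)
  have hne := mt (hB' _ _ _).1 not_valid_relations
  rw [not_forall] at hne
  obtain ⟨i, hi⟩ := hne
  unfold ISQValid at hi
  push Not at hi
  obtain ⟨v, hv, hne⟩ := hi
  have hinj : Function.Injective fun p => (elTerm p).eval (B i) v := by
    intro p q hpq
    by_contra hne'
    exact hne ((hB' _ _ _).2 (valid_relations_of_ne hne') i v
      (List.forall_mem_cons.2 ⟨hpq, hv⟩))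
  have := hfin i
  refine ⟨i, ?_⟩
  simpa using Nat.card_le_card_of_injective _ hinj

theorem statement19 :
    (∃ A : ISAlg, Nat.card A.carrier = 12 ∧
      ∀ (Γ : List (ISTerm ℕ × ISTerm ℕ)) (φ ψ : ISTerm ℕ),
        ISAdmissible L5alg Γ φ ψ ↔ ISQValid A Γ φ ψ) ∧
    (∀ (k : ℕ) (B : Fin k → ISAlg),
      (∀ i, Finite (B i).carrier) →
      (∀ (Γ : List (ISTerm ℕ × ISTerm ℕ)) (φ ψ : ISTerm ℕ),
        (∀ i, ISQValid (B i) Γ φ ψ) ↔ ISAdmissible L5alg Γ φ ψ) →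
      MultisetLE ({12} : Multiset ℕ)
        (↑(List.ofFn fun i => Nat.card (B i).carrier))) := by
  refine ⟨⟨A12, ?_, admissible_iff⟩, fun k B hfin hB x hx => ?_⟩
  · change Nat.card (Fin 6 × Fin 2) = 12
    simp
  · obtain ⟨i, hi⟩ := exists_card_ge B hfin hB
    have hmem : Nat.card (B i).carrier ∈
        (↑(List.ofFn fun i => Nat.card (B i).carrier) : Multiset ℕ) := by
      simp
    have hx12 : x = 12 := by
      by_contra hne
      simp [hne] at hx
    subst hx12
    have hlt : 12 < Nat.card (B i).carrier := by
      refine lt_of_le_of_ne hi fun he => ?_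
      rw [← he] at hmem
      have := Multiset.count_pos.2 hmem
      rw [Multiset.count_singleton_self] at hx
      omega
    refine ⟨_, hlt, ?_⟩
    rw [Multiset.count_singleton, if_neg hlt.ne']
    exact Multiset.count_pos.2 hmem
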